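/- arXiv:1702.07104 — 2 statements merged into one kernel-verified Lean document; each statement's English description precedes it below -/
import Mathlib

section
/- The rank of the abelian group C_W = ker φ equals c(W); that is, the ℚ-vector space C_W ⊗_ℤ ℚ has dimension c(W). -/
open Quandles Rack CoxeterSystem

variable {B : Type} [Fintype B] {W : Type} [Group W] {M : CoxeterMatrix B}

/-- The Coxeter quandle `Q_W`: the set of reflections of `W`, with operation given by
conjugation. (Since reflections are involutions, `x ◃ y = x y x⁻¹ = x⁻¹ y x`.) -/
def CoxeterQuandle (cs : CoxeterSystem M W) : Type := {w : W // cs.IsReflection w}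

instance (cs : CoxeterSystem M W) : Quandle (CoxeterQuandle cs) where
  act x y := ⟨x.1 * y.1 * x.1⁻¹, y.2.conj x.1⟩
  self_distrib := by
    rintro ⟨x, _⟩ ⟨y, _⟩ ⟨z, _⟩
    apply Subtype.ext
    show x * (y * z * y⁻¹) * x⁻¹ = (x * y * x⁻¹) * (x * z * x⁻¹) * (x * y * x⁻¹)⁻¹
    group
  invAct x y := ⟨x.1⁻¹ * y.1 * x.1, by simpa using y.2.conj x.1⁻¹⟩
  left_inv := by
    rintro ⟨x, _⟩ ⟨y, _⟩
    apply Subtype.ext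
    show x⁻¹ * (x * y * x⁻¹) * x = y
    group
  right_inv := by
    rintro ⟨x, _⟩ ⟨y, _⟩
    apply Subtype.ext
    show x * (x⁻¹ * y * x) * x⁻¹ = y
    group
  fix := by
    rintro ⟨x, hx⟩
    apply Subtype.ext
    show x * x * x⁻¹ = x
    group

/-- The canonical generator `e_x` of the adjoint (enveloping) group `Ad(Q_W)` of the
Coxeter quandle, associated with the reflection `x`. -/
def coxE (cs : CoxeterSystem M W) (x : CoxeterQuandle cs) :
    EnvelGroup (CoxeterQuandle cs) :=
  Rack.toEnvelGroup (CoxeterQuandle cs) x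

/-!
An element of `Ad(Q_W)` acting trivially on `Q_W` commutes with every generator, so `ker φ` is
central. The squares `e_x ^ 2` lie in `ker φ`, and being central they depend only on the conjugacy
class of `x`. They generate `ker φ`: modulo the squares, conjugation in `Q_W` already forces the
Coxeter relations on the `e_{sᵢ}`, because the reflections `(sᵢ sⱼ) ^ k sᵢ` are obtained from `sᵢ`
and `sⱼ` by quandle operations alone and recur with period `M i j`; hence the quotient of `Ad(Q_W)`
by the squares is `W`. Finally, sending `e_x` to the basis vector of its class in the free abelian
group on the classes of reflections maps the squares to twice the basis vectors, so the squares,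
one for each class, form a `ℤ`-basis of `ker φ`.
-/

section Algebra

theorem exists_basis_of_map_eq_single {R N X ι : Type*} [Ring R] [IsDomain R] [AddCommGroup N]
    [Module R N] {s : X → N} {c : X → ι} (hs : Submodule.span R (Set.range s) = ⊤)
    (hc : Function.Surjective c) (hsc : s.FactorsThrough c) {r : R} (hr : r ≠ 0)
    (d : N →ₗ[R] ι →₀ R) (hd : ∀ x, d (s x) = Finsupp.single (c x) r) :
    ∃ b : Module.Basis ι R N, ∀ x, b (c x) = s x := by
  obtain ⟨v, rfl⟩ := (Function.factorsThrough_iff s).1 hsc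
  have hdv : d ∘ v = fun i ↦ Finsupp.single i r := funext <| hc.forall.2 hd
  have hli : LinearIndependent R v :=
    .of_comp d (hdv ▸ Finsupp.linearIndependent_single_of_ne_zero fun _ ↦ hr)
  rw [hc.range_comp] at hs
  exact ⟨.mk hli hs.ge, fun x ↦ Module.Basis.mk_apply hli hs.ge (c x)⟩

theorem normal_of_le_center {G : Type*} [Group G] {H : Subgroup G} (hH : H ≤ Subgroup.center G) :
    H.Normal :=
  ⟨fun n hn g ↦ by rwa [Subgroup.mem_center_iff.1 (hH hn) g, mul_inv_cancel_right]⟩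

theorem span_int_range_abelianization_of {G X : Type*} [Group G] {s : X → G}
    (hs : Subgroup.closure (Set.range s) = ⊤) :
    Submodule.span ℤ (Set.range fun x ↦ Additive.ofMul (Abelianization.of (s x))) = ⊤ := by
  let S := Submodule.span ℤ (Set.range fun x ↦ Additive.ofMul (Abelianization.of (s x)))
  have hS : Subgroup.closure (Set.range s) ≤
      (AddSubgroup.toSubgroup' S.toAddSubgroup).comap Abelianization.of := by
    rw [Subgroup.closure_le, Set.range_subset_iff]
    exact fun x ↦ Submodule.subset_span ⟨x, rfl⟩
  rw [hs] at hS
  refine Submodule.eq_top_iff'.2 fun z ↦ ?_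
  obtain ⟨g, rfl⟩ : ∃ g, Additive.ofMul (Abelianization.of g) = z :=
    QuotientGroup.mk_surjective z.toMul
  exact hS (Subgroup.mem_top g)

variable {G : Type*} [Group G] {a b : G}

theorem mul_pow_mul_left_mul_self (ha : a * a = 1) (hb : b * b = 1) (k : ℕ) :
    (a * b) ^ k * a * ((a * b) ^ k * a) = 1 := by
  have hab : SemiconjBy a (a * b) (a * b)⁻¹ := by
    rw [SemiconjBy, mul_inv_rev, inv_eq_of_mul_eq_one_left ha, inv_eq_of_mul_eq_one_left hb,
      ← mul_assoc, ha, one_mul, mul_assoc, ha, mul_one]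
  rw [mul_assoc, ← mul_assoc a, (hab.pow_right k).eq, inv_pow, mul_assoc, ha, mul_one,
    mul_inv_cancel]

theorem mul_pow_succ_mul_left_conj (ha : a * a = 1) (hb : b * b = 1) (k : ℕ) :
    (a * b) ^ (k + 1) * a * ((a * b) ^ k * a) * ((a * b) ^ (k + 1) * a)⁻¹ =
      (a * b) ^ (k + 2) * a := by
  rw [inv_eq_of_mul_eq_one_left (mul_pow_mul_left_mul_self ha hb (k + 1)), pow_succ' _ k,
    mul_assoc (a * b), mul_assoc (a * b), mul_pow_mul_left_mul_self ha hb, mul_one,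
    pow_succ' _ (k + 1), pow_succ' _ k]
  simp only [mul_assoc]

end Algebra

section Racks

/-- The sequence `x`, `x ◃ y`, `(x ◃ y) ◃ x`, … in which each term acts on its predecessor to give
its successor. If `x` and `y` are involutions of a group acting by conjugation, the terms are the
reflections `(x * y) ^ k * x` of the dihedral group they generate. -/
def dihedralSeq {S : Type*} [Shelf S] (x y : S) : ℕ → S
  | 0 => x
  | 1 => x ◃ y
  | k + 2 => dihedralSeq x y (k + 1) ◃ dihedralSeq x y k

theorem map_dihedralSeq {S G : Type*} [Shelf S] [Group G] (f : S →◃ Quandle.Conj G) {x y : S}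
    (hx : f x * f x = 1) (hy : f y * f y = 1) (k : ℕ) :
    f (dihedralSeq x y k) = (f x * f y) ^ k * f x := by
  induction k using Nat.twoStepInduction with
  | zero => rw [dihedralSeq, pow_zero, one_mul]
  | one => rw [dihedralSeq, f.map_act, Quandle.conj_act_eq_conj, inv_eq_of_mul_eq_one_left hx,
      pow_one]
  | more k ih ih' => rw [dihedralSeq, f.map_act, Quandle.conj_act_eq_conj, ih, ih',
      mul_pow_succ_mul_left_conj hx hy]

variable {R : Type*} [Rack R] {G : Type*} [Group G]

variable (R) in
theorem closure_range_toEnvelGroup : Subgroup.closure (Set.range (toEnvelGroup R)) = ⊤ := by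
  refine (Subgroup.eq_top_iff' _).2 fun g ↦ ?_
  induction g using Quotient.inductionOn with | _ g
  induction g with
  | unit => exact one_mem _
  | incl x => exact Subgroup.subset_closure ⟨x, rfl⟩
  | mul _ _ iha ihb => exact mul_mem iha ihb
  | inv _ iha => exact inv_mem iha

theorem envelGroup_hom_ext {f g : EnvelGroup R →* G}
    (h : ∀ x, f (toEnvelGroup R x) = g (toEnvelGroup R x)) : f = g :=
  MonoidHom.eq_of_eqOn_dense (closure_range_toEnvelGroup R) (Set.forall_mem_range.2 h)

theorem conj_toEnvelGroup (g : EnvelGroup R) (x : R) :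
    g * toEnvelGroup R x * g⁻¹ = toEnvelGroup R (envelAction g x) := by
  have hg : g ∈ Subgroup.closure (Set.range (toEnvelGroup R)) :=
    closure_range_toEnvelGroup R ▸ Subgroup.mem_top g
  induction hg using Subgroup.closure_induction generalizing x with
  | mem _ hy =>
    obtain ⟨y, rfl⟩ := hy
    rw [envelAction_prop, (toEnvelGroup R).map_act, Quandle.conj_act_eq_conj]
  | one => simp only [one_mul, inv_one, mul_one, map_one, Equiv.Perm.one_apply]
  | mul a b _ _ iha ihb =>
    rw [map_mul, Equiv.Perm.mul_apply, ← iha, ← ihb]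
    group
  | inv a _ ih =>
    obtain ⟨y, rfl⟩ := (envelAction a).surjective x
    rw [← ih, map_inv, Equiv.Perm.inv_def, Equiv.symm_apply_apply]
    group

theorem ker_le_center_of_injective (φ : EnvelGroup R →* G)
    (hφ : Function.Injective fun x ↦ φ (toEnvelGroup R x)) :
    φ.ker ≤ Subgroup.center (EnvelGroup R) := by
  intro a ha
  have hact (x : R) : envelAction a x = x := by
    apply hφ
    simp only [← conj_toEnvelGroup, map_mul, map_inv, MonoidHom.mem_ker.1 ha, one_mul, inv_one,
      mul_one]
  have hconj : (MulAut.conj a).toMonoidHom = MonoidHom.id (EnvelGroup R) :=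
    envelGroup_hom_ext fun x ↦ (conj_toEnvelGroup a x).trans (congrArg _ (hact x))
  exact Subgroup.mem_center_iff.2 fun g ↦
    (mul_inv_eq_iff_eq_mul.1 (DFunLike.congr_fun hconj g)).symm

/-- The homomorphism sending the generator of `x` to the basis vector of `c x`, for a function `c`
that is constant on the orbits of a rack: it counts generators orbit by orbit, with signs. -/
noncomputable def envelDegree {ι : Type*} (c : R → ι) (hc : ∀ x y, c (x ◃ y) = c y) :
    EnvelGroup R →* Multiplicative (ι →₀ ℤ) :=
  toEnvelGroup.map
    { toFun x := Multiplicative.ofAdd (Finsupp.single (c x) 1)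
      map_act' {x y} := by rw [hc, Quandle.conj_act_eq_conj, mul_inv_cancel_comm] }

theorem envelDegree_toEnvelGroup {ι : Type*} (c : R → ι) (hc : ∀ x y, c (x ◃ y) = c y) (x : R) :
    envelDegree c hc (toEnvelGroup R x) = Multiplicative.ofAdd (Finsupp.single (c x) 1) :=
  rfl

end Racks

namespace CoxeterQuandle

omit [Fintype B]

variable (cs : CoxeterSystem M W)

/-- The reflection `sᵢ`, as an element of the Coxeter quandle. -/
def simple (i : B) : CoxeterQuandle cs :=
  ⟨cs.simple i, cs.isReflection_simple i⟩

/-- The inclusion of the reflections into the conjugation quandle of the Coxeter group. -/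
def incl : CoxeterQuandle cs →◃ Quandle.Conj W where
  toFun := Subtype.val
  map_act' := rfl

theorem incl_injective : Function.Injective (incl cs) :=
  Subtype.val_injective

theorem incl_mul_self (x : CoxeterQuandle cs) : incl cs x * incl cs x = 1 :=
  x.2.mul_self

variable {cs} in
theorem simple_act_induction {p : CoxeterQuandle cs → Prop} (hsimple : ∀ i, p (simple cs i))
    (hact : ∀ i x, p x → p (simple cs i ◃ x)) (x : CoxeterQuandle cs) : p x := by
  obtain ⟨w, j, hx⟩ : ∃ w j, incl cs x = w * cs.simple j * w⁻¹ := x.2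
  induction w using cs.simple_induction_left generalizing x with
  | one =>
    rw [one_mul, inv_one, mul_one] at hx
    exact (incl_injective cs hx : x = simple cs j) ▸ hsimple j
  | mul_simple_left w i ih =>
    let y : CoxeterQuandle cs := ⟨w * cs.simple j * w⁻¹, w, j, rfl⟩
    have hxy : x = simple cs i ◃ y := by
      apply incl_injective cs
      change incl cs x = cs.simple i * (w * cs.simple j * w⁻¹) * (cs.simple i)⁻¹
      rw [hx]
      group
    exact hxy ▸ hact i y (ih y rfl)

section Lift

variable {H : Type*} [Group H] (f : CoxeterQuandle cs →◃ Quandle.Conj H)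
  (hf : ∀ x, f x * f x = 1)

include hf

theorem isLiftable_simple : M.IsLiftable fun i ↦ f (simple cs i) := by
  intro i j
  have hseq : dihedralSeq (simple cs i) (simple cs j) (M i j) = simple cs i := by
    apply incl_injective cs
    rw [map_dihedralSeq _ (incl_mul_self cs _) (incl_mul_self cs _)]
    exact (congrArg (· * cs.simple i) (cs.simple_mul_simple_pow i j)).trans (one_mul _)
  have hmap := map_dihedralSeq f (hf (simple cs i)) (hf (simple cs j)) (M i j)
  rwa [hseq, right_eq_mul] at hmap

theorem exists_monoidHom_apply_incl : ∃ ψ : W →* H, ∀ x, ψ (incl cs x) = f x := by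
  refine ⟨cs.lift ⟨_, isLiftable_simple cs f hf⟩, fun x ↦ ?_⟩
  have hsimple (i : B) := cs.lift_apply_simple (isLiftable_simple cs f hf) i
  induction x using simple_act_induction with
  | hsimple i => exact hsimple i
  | hact i x ih =>
    rw [(incl cs).map_act, f.map_act, Quandle.conj_act_eq_conj, Quandle.conj_act_eq_conj, map_mul,
      map_mul, map_inv, ih]
    exact congrArg (fun a ↦ a * f x * a⁻¹) (hsimple i)

end Lift

/-- The homomorphism `φ : Ad(Q_W) → W` determined by `e_x ↦ x`. -/
def envelProj : EnvelGroup (CoxeterQuandle cs) →* W :=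
  toEnvelGroup.map (incl cs)

theorem envelProj_toEnvelGroup (x : CoxeterQuandle cs) :
    envelProj cs (toEnvelGroup _ x) = incl cs x :=
  rfl

theorem envelProj_surjective : Function.Surjective (envelProj cs) := by
  rw [← MonoidHom.range_eq_top, eq_top_iff, ← cs.subgroup_closure_range_simple,
    Subgroup.closure_le, Set.range_subset_iff]
  exact fun i ↦ ⟨toEnvelGroup _ (simple cs i), rfl⟩

theorem ker_envelProj_le_center :
    (envelProj cs).ker ≤ Subgroup.center (EnvelGroup (CoxeterQuandle cs)) :=
  ker_le_center_of_injective _ (incl_injective cs)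

/-- The square of the generator `e_x`, as an element of the kernel of `φ`. -/
def kerSq (x : CoxeterQuandle cs) : (envelProj cs).ker :=
  ⟨toEnvelGroup _ x ^ 2, by
    rw [MonoidHom.mem_ker, map_pow, envelProj_toEnvelGroup, sq, incl_mul_self]⟩

theorem closure_range_kerSq : Subgroup.closure (Set.range (kerSq cs)) = ⊤ := by
  let A := (Subgroup.closure (Set.range (kerSq cs))).map (envelProj cs).ker.subtype
  have hA : A ≤ (envelProj cs).ker := Subgroup.map_subtype_le _
  have : A.Normal := normal_of_le_center (hA.trans (ker_envelProj_le_center cs))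
  let q := QuotientGroup.mk' A
  have hq (x) : q (toEnvelGroup _ x) * q (toEnvelGroup _ x) = 1 := by
    rw [← map_mul, ← sq]
    exact (QuotientGroup.eq_one_iff _).2 ⟨kerSq cs x, Subgroup.subset_closure ⟨x, rfl⟩, rfl⟩
  obtain ⟨ψ, hψ⟩ := exists_monoidHom_apply_incl cs ((Quandle.Conj.map q).comp (toEnvelGroup _)) hq
  have hψq : ψ.comp (envelProj cs) = q := envelGroup_hom_ext hψ
  refine (Subgroup.eq_top_iff' _).2 fun g ↦ ?_
  have hg : q g = 1 := by rw [← hψq, MonoidHom.comp_apply, g.2, map_one]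
  obtain ⟨k, hk, hkg⟩ := (QuotientGroup.eq_one_iff _).1 hg
  rwa [← Subtype.ext hkg]

variable {cs} in
theorem kerSq_eq_of_isConj {x y : CoxeterQuandle cs} (h : IsConj (incl cs x) (incl cs y)) :
    kerSq cs x = kerSq cs y := by
  obtain ⟨w, hw⟩ := isConj_iff.1 h
  obtain ⟨g, rfl⟩ := envelProj_surjective cs w
  have hxy : envelAction g x = y := by
    apply incl_injective cs
    rw [← hw, ← envelProj_toEnvelGroup, ← conj_toEnvelGroup, map_mul, map_mul, map_inv,
      envelProj_toEnvelGroup]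
  have hcomm : g * toEnvelGroup _ x ^ 2 = toEnvelGroup _ x ^ 2 * g :=
    Subgroup.mem_center_iff.1 (ker_envelProj_le_center cs (kerSq cs x).2) g
  apply Subtype.ext
  change toEnvelGroup _ x ^ 2 = toEnvelGroup _ y ^ 2
  rw [← hxy, ← conj_toEnvelGroup, conj_pow, hcomm, mul_inv_cancel_right]

/-- The conjugacy classes of reflections. -/
abbrev ReflectionClass : Type :=
  {c : ConjClasses W // ∃ t : W, cs.IsReflection t ∧ ConjClasses.mk t = c}

/-- The conjugacy class of a reflection. -/
def reflectionClass (x : CoxeterQuandle cs) : ReflectionClass cs :=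
  ⟨ConjClasses.mk x.1, x.1, x.2, rfl⟩

theorem reflectionClass_surjective : Function.Surjective (reflectionClass cs) := by
  rintro ⟨_, t, ht, rfl⟩
  exact ⟨⟨t, ht⟩, rfl⟩

variable {cs} in
theorem reflectionClass_eq_iff {x y : CoxeterQuandle cs} :
    reflectionClass cs x = reflectionClass cs y ↔ IsConj (incl cs x) (incl cs y) :=
  Subtype.ext_iff.trans ConjClasses.mk_eq_mk_iff_isConj

theorem reflectionClass_act (x y : CoxeterQuandle cs) :
    reflectionClass cs (x ◃ y) = reflectionClass cs y :=
  reflectionClass_eq_iff.2 (isConj_iff.2 ⟨incl cs x, rfl⟩).symm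

/-- The degree map of the enveloping group, restricted to the kernel of `φ`. -/
noncomputable def kerDegree :
    Additive (Abelianization (envelProj cs).ker) →ₗ[ℤ] ReflectionClass cs →₀ ℤ :=
  (MonoidHom.toAdditiveLeft <| Abelianization.lift <|
    (envelDegree _ (reflectionClass_act cs)).comp (envelProj cs).ker.subtype).toIntLinearMap

theorem kerDegree_kerSq (x : CoxeterQuandle cs) :
    kerDegree cs (.ofMul (.of (kerSq cs x))) = Finsupp.single (reflectionClass cs x) 2 := by
  change (envelDegree _ (reflectionClass_act cs) (toEnvelGroup _ x ^ 2)).toAdd = _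
  rw [map_pow, envelDegree_toEnvelGroup, toAdd_pow, toAdd_ofAdd, Finsupp.smul_single,
    nsmul_one, Nat.cast_ofNat]

theorem exists_basis_kerSq :
    ∃ b : Module.Basis (ReflectionClass cs) ℤ (Additive (Abelianization (envelProj cs).ker)),
      ∀ x, b (reflectionClass cs x) = .ofMul (.of (kerSq cs x)) :=
  exists_basis_of_map_eq_single (span_int_range_abelianization_of (closure_range_kerSq cs))
    (reflectionClass_surjective cs)
    (fun _ _ h ↦ congrArg (Additive.ofMul <| Abelianization.of ·)
      (kerSq_eq_of_isConj (reflectionClass_eq_iff.1 h)))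
    two_ne_zero (kerDegree cs) (kerDegree_kerSq cs)

end CoxeterQuandle

open TensorProduct CoxeterQuandle in
omit [Fintype B] in
theorem stmt_7_general (cs : CoxeterSystem M W) (φ : EnvelGroup (CoxeterQuandle cs) →* W)
    (hφ : ∀ x : CoxeterQuandle cs, φ (coxE cs x) = x.1) :
    (∀ a b : φ.ker, a * b = b * a) ∧
    Module.rank ℚ (ℚ ⊗[ℤ] Additive (Abelianization φ.ker)) =
      Cardinal.mk {c : ConjClasses W // ∃ t : W, cs.IsReflection t ∧ ConjClasses.mk t = c} := by
  obtain rfl : φ = envelProj cs := envelGroup_hom_ext hφ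
  obtain ⟨b, -⟩ := exists_basis_kerSq cs
  refine ⟨fun x y ↦ Subtype.ext ?_, (b.baseChange ℚ).mk_eq_rank''.symm⟩
  exact Subgroup.mem_center_iff.1 (ker_envelProj_le_center cs y.2) x

open TensorProduct in
/-- The rank of the abelian group `C_W = ker φ` equals `c(W)`: the `ℚ`-vector space
`C_W ⊗_ℤ ℚ` has dimension `c(W)`, the number of `W`-conjugacy classes of reflections.
(Since `C_W` is central it is abelian, as the first conjunct asserts, so it coincides
with its abelianization, which we use to form the tensor product.) -/
theorem stmt_7 (cs : CoxeterSystem M W)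
    (φ : EnvelGroup (CoxeterQuandle cs) →* W)
    (hφ : ∀ x : CoxeterQuandle cs, φ (coxE cs x) = x.1) :
    (∀ a b : φ.ker, a * b = b * a) ∧
    Module.finrank ℚ (ℚ ⊗[ℤ] Additive (Abelianization φ.ker)) =
      Nat.card {c : ConjClasses W // ∃ t : W, cs.IsReflection t ∧ ConjClasses.mk t = c} := by
  obtain ⟨hcomm, hrank⟩ := stmt_7_general cs φ hφ
  exact ⟨hcomm, congrArg Cardinal.toNat hrank⟩
end

section
/- For all distinct s, t ∈ S with m(s,t) < ∞, the braid relation (e_s e_t)_{m(s,t)} = (e_t e_s)_{m(s,t)} holds in Ad(Q_W), where (gh)_m denotes the alternating product ghghg⋯ with m factors. -/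
open Quandles Rack CoxeterSystem

variable {B : Type} [Fintype B] {W : Type} [Group W] {M : CoxeterMatrix B}

/-- The alternating product `(gh)_m = ghgh⋯` with `m` factors. -/
def altProd {G : Type*} [One G] [Mul G] (g h : G) : ℕ → G
  | 0 => 1
  | n + 1 => g * altProd h g n

/-!
The action of `Ad(Q)` on `Q` makes `x ↦ e_x` equivariant: `g e_z g⁻¹ = e_{g • z}`. If `Q` embeds
in a group `G` as a conjugation rack, then `g • z` is determined by the image of `g` in `G`, so a
relation `g e_z = e_{z'} g` holds in `Ad(Q)` as soon as it holds in `G`. The braid relation of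
length `n + 1` has this form: with `g = (e_x e_y)_n` and `z` the next letter, `x` or `y` according
to the parity of `n`, it reads `g e_z = e_y g`.
-/

section AlternatingProduct

variable {G : Type*}

theorem map_altProd {N : Type*} [MulOneClass G] [MulOneClass N] (f : G →* N) (g h : G) (n : ℕ) :
    f (altProd g h n) = altProd (f g) (f h) n := by
  induction n generalizing g h with
  | zero => exact map_one f
  | succ n ih => rw [altProd, altProd, map_mul, ih]

theorem altProd_succ_right [Monoid G] (g h : G) (n : ℕ) :
    altProd g h (n + 1) = altProd g h n * if Even n then g else h := by
  induction n generalizing g h with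
  | zero => simp [altProd]
  | succ n ih =>
    rw [altProd, ih, altProd, mul_assoc]
    simp only [Nat.even_add_one, ite_not]

theorem altProd_succ_comm_iff_semiconjBy [Monoid G] (g h : G) (n : ℕ) :
    altProd g h (n + 1) = altProd h g (n + 1) ↔
      SemiconjBy (altProd g h n) (if Even n then g else h) h := by
  rw [altProd_succ_right g h, altProd, SemiconjBy]

theorem altProd_mul_inv_altProd_of_inv_eq_self [Group G] {g h : G} (hg : g⁻¹ = g) (hh : h⁻¹ = h)
    (n : ℕ) : altProd g h n * (altProd h g n)⁻¹ = (g * h) ^ n := by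
  induction n generalizing g h with
  | zero => simp [altProd]
  | succ n ih =>
    calc altProd g h (n + 1) * (altProd h g (n + 1))⁻¹
        = g * (altProd h g n * (altProd g h n)⁻¹) * h := by
          simp only [altProd, mul_inv_rev, hh, mul_assoc]
      _ = g * (h * g) ^ n * h := by rw [ih hh hg]
      _ = (g * h) ^ (n + 1) := by rw [← mul_pow_mul, mul_assoc, ← pow_succ]

theorem altProd_comm_of_mul_pow_eq_one [Group G] {g h : G} (hg : g⁻¹ = g) (hh : h⁻¹ = h) {n : ℕ}
    (hgh : (g * h) ^ n = 1) : altProd g h n = altProd h g n := by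
  rw [← mul_inv_eq_one, altProd_mul_inv_altProd_of_inv_eq_self hg hh, hgh]

end AlternatingProduct

section EnvelopingGroup

variable {R G : Type*} [Rack R] [Group G]

@[elab_as_elim]
theorem envelGroup_induction {p : EnvelGroup R → Prop} (g : EnvelGroup R)
    (one : p 1) (of : ∀ x, p (toEnvelGroup R x)) (mul : ∀ a b, p a → p b → p (a * b))
    (inv : ∀ a, p a → p a⁻¹) : p g := by
  induction g using Quotient.inductionOn with | h g => ?_
  induction g with
  | unit => exact one
  | incl x => exact of x
  | mul a b iha ihb => exact mul _ _ iha ihb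
  | inv a iha => exact inv _ iha

theorem apply_envelAction (f : R →◃ Quandle.Conj G) (g : EnvelGroup R) (z : R) :
    f (envelAction g z) = toEnvelGroup.map f g * f z * (toEnvelGroup.map f g)⁻¹ := by
  induction g using envelGroup_induction generalizing z with
  | one => simp only [map_one, Equiv.Perm.one_apply, one_mul, inv_one, mul_one]
  | of x => exact f.map_act
  | mul a b iha ihb =>
    simp only [map_mul, Equiv.Perm.mul_apply, iha, ihb, mul_inv_rev, mul_assoc]
  | inv a iha =>
    have hz : f z = toEnvelGroup.map f a * f ((envelAction a)⁻¹ z) * (toEnvelGroup.map f a)⁻¹ := by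
      simpa only [Equiv.Perm.inv_def, Equiv.apply_symm_apply] using iha ((envelAction a)⁻¹ z)
    rw [map_inv, map_inv, hz]
    group

theorem toEnvelGroup_map_toEnvelGroup :
    toEnvelGroup.map (toEnvelGroup R) = MonoidHom.id (EnvelGroup R) :=
  (toEnvelGroup.univ_uniq R (EnvelGroup R) (toEnvelGroup R) (MonoidHom.id _) rfl).symm

theorem toEnvelGroup_envelAction (g : EnvelGroup R) (z : R) :
    toEnvelGroup R (envelAction g z) = g * toEnvelGroup R z * g⁻¹ := by
  rw [apply_envelAction, toEnvelGroup_map_toEnvelGroup]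
  rfl

theorem semiconjBy_toEnvelGroup_of_injective {f : R →◃ Quandle.Conj G} (hf : Function.Injective f)
    {g : EnvelGroup R} {z z' : R} (h : SemiconjBy (toEnvelGroup.map f g) (f z) (f z')) :
    SemiconjBy g (toEnvelGroup R z : EnvelGroup R) (toEnvelGroup R z') := by
  have hz : envelAction g z = z' := by
    apply hf
    rw [apply_envelAction, h.eq, mul_inv_cancel_right]
  rw [SemiconjBy, ← hz, toEnvelGroup_envelAction, inv_mul_cancel_right]

theorem altProd_toEnvelGroup_comm_of_injective {f : R →◃ Quandle.Conj G}
    (hf : Function.Injective f) {x y : R} {n : ℕ}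
    (h : altProd (f x : G) (f y) n = altProd (f y) (f x) n) :
    altProd (toEnvelGroup R x : EnvelGroup R) (toEnvelGroup R y) n =
      altProd (toEnvelGroup R y) (toEnvelGroup R x) n := by
  cases n with
  | zero => rfl
  | succ n =>
    rw [altProd_succ_comm_iff_semiconjBy, ← apply_ite] at h ⊢
    apply semiconjBy_toEnvelGroup_of_injective hf
    rw [map_altProd]
    exact h

end EnvelopingGroup

/-- The inclusion of the reflections into `W`, as a homomorphism from the Coxeter quandle to the
conjugation quandle of `W`. -/
def CoxeterQuandle.incl_s8 (cs : CoxeterSystem M W) : CoxeterQuandle cs →◃ Quandle.Conj W where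
  toFun := Subtype.val
  map_act' := rfl

theorem stmt_8_general {B W : Type} [Group W] {M : CoxeterMatrix B} (cs : CoxeterSystem M W)
    (x y : CoxeterQuandle cs) {n : ℕ} (hxy : (x.1 * y.1) ^ n = 1) :
    altProd (coxE cs x) (coxE cs y) n = altProd (coxE cs y) (coxE cs x) n :=
  altProd_toEnvelGroup_comm_of_injective (f := CoxeterQuandle.incl_s8 cs) Subtype.val_injective
    (altProd_comm_of_mul_pow_eq_one x.2.inv y.2.inv hxy)

/-- For all distinct `s, t ∈ S` with `m(s,t) < ∞` (a `0` entry of a Coxeter matrix encodes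
`m(s,t) = ∞`), the braid relation `(e_s e_t)_{m(s,t)} = (e_t e_s)_{m(s,t)}` holds in
`Ad(Q_W)`. -/
theorem stmt_8 (cs : CoxeterSystem M W) (s t : B) (hst : s ≠ t) (hfin : M s t ≠ 0) :
    altProd (coxE cs ⟨cs.simple s, cs.isReflection_simple s⟩)
        (coxE cs ⟨cs.simple t, cs.isReflection_simple t⟩) (M s t) =
      altProd (coxE cs ⟨cs.simple t, cs.isReflection_simple t⟩)
        (coxE cs ⟨cs.simple s, cs.isReflection_simple s⟩) (M s t) :=
  stmt_8_general cs _ _ (cs.simple_mul_simple_pow s t)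
end
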